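/- Let H be a complex Hilbert space, M a von Neumann algebra acting on H, and ξ₀ a cyclic and separating vector for M. For every positive a ∈ M, the sharp norm of a ξ₀ equals the operator norm of a: inf { c ∈ ℝ : c > 0 and ξ₀ − c⁻¹ • (a ξ₀) ∈ P♯ } = ‖a‖. -/

import Mathlib

/-!
For `c > 0` the vector `ξ₀ - c⁻¹ • a ξ₀` is `b ξ₀` with `b = 1 - c⁻¹ • a ∈ M`, and `b` is positive
if and only if `‖a‖ ≤ c`. So it suffices that `b ξ₀ ∈ P♯` forces `b` to be positive. If `y` lies in
the commutant `M'`, then `⟪y ζ, y ξ₀⟫ ≥ 0` for `ζ = x ξ₀` with `x ∈ M` positive, because `y`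
commutes with `x`, and hence for all `ζ ∈ P♯`. Taking `ζ = b ξ₀` gives `⟪b (y ξ₀), y ξ₀⟫ ≥ 0`, and
the vectors `y ξ₀` are dense: the projection onto the closure of `M' ξ₀` lies in `M'' = M` and
fixes `ξ₀`, so it is `1` because `ξ₀` is separating.
-/

open scoped InnerProductSpace
open Filter

variable {H : Type*} [NormedAddCommGroup H] [InnerProductSpace ℂ H] [CompleteSpace H]

/-- The positive cone `P♯`: the closure in `H` of `{a ξ₀ : a ∈ M, a positive}`. -/
def sharpCone (M : VonNeumannAlgebra H) (ξ₀ : H) : Set H :=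
  closure {ζ : H | ∃ a : H →L[ℂ] H, a ∈ M ∧ a.IsPositive ∧ a ξ₀ = ζ}

/-- `ξ₀` is a cyclic vector for `M`: the linear span of `{x ξ₀ : x ∈ M}` is dense in `H`. -/
def IsCyclicVector (M : VonNeumannAlgebra H) (ξ₀ : H) : Prop :=
  Dense ((Submodule.span ℂ ((fun x : H →L[ℂ] H => x ξ₀) '' (M : Set (H →L[ℂ] H)))) : Set H)

/-- `ξ₀` is a separating vector for `M`: `x ∈ M` and `x ξ₀ = 0` imply `x = 0`. -/
def IsSeparatingVector (M : VonNeumannAlgebra H) (ξ₀ : H) : Prop :=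
  ∀ x : H →L[ℂ] H, x ∈ M → x ξ₀ = 0 → x = 0

section CyclicSubspace

/-- The cyclic subspace `[N ξ]` generated by `ξ` under `N`. It is taken to be the closure of the
span of the orbit, so that `IsCyclicVector N ξ` says that it is everything. -/
abbrev cyclicSubspace (N : VonNeumannAlgebra H) (ξ : H) : Submodule ℂ H :=
  (Submodule.span ℂ ((fun x : H →L[ℂ] H => x ξ) '' (N : Set (H →L[ℂ] H)))).topologicalClosure

variable {N : VonNeumannAlgebra H} {ξ : H}

theorem isCyclicVector_iff_cyclicSubspace_eq_top :
    IsCyclicVector N ξ ↔ cyclicSubspace N ξ = ⊤ :=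
  Submodule.dense_iff_topologicalClosure_eq_top

theorem coe_span_orbit (N : VonNeumannAlgebra H) (ξ : H) :
    (Submodule.span ℂ ((fun x : H →L[ℂ] H => x ξ) '' (N : Set (H →L[ℂ] H))) : Set H) =
      (fun x : H →L[ℂ] H => x ξ) '' (N : Set (H →L[ℂ] H)) :=
  congrArg SetLike.coe (Submodule.span_eq ((Subalgebra.toSubmodule N.toSubalgebra).map
    (ContinuousLinearMap.apply ℂ H ξ).toLinearMap))

theorem IsCyclicVector.dense_orbit (hξ : IsCyclicVector N ξ) :
    Dense ((fun x : H →L[ℂ] H => x ξ) '' (N : Set (H →L[ℂ] H))) :=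
  coe_span_orbit N ξ ▸ hξ

theorem self_mem_cyclicSubspace (N : VonNeumannAlgebra H) (ξ : H) : ξ ∈ cyclicSubspace N ξ :=
  Submodule.le_topologicalClosure _ (Submodule.subset_span ⟨1, one_mem N, rfl⟩)

theorem apply_mem_cyclicSubspace {y : H →L[ℂ] H} (hy : y ∈ N) {ζ : H}
    (hζ : ζ ∈ cyclicSubspace N ξ) : y ζ ∈ cyclicSubspace N ξ := by
  let orbit : Set H := (fun x : H →L[ℂ] H => x ξ) '' (N : Set (H →L[ℂ] H))
  have hmaps : Set.MapsTo y (Submodule.span ℂ orbit) (Submodule.span ℂ orbit) := by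
    rw [coe_span_orbit]
    rintro _ ⟨z, hz, rfl⟩
    exact ⟨y * z, mul_mem hy hz, rfl⟩
  exact map_mem_closure y.continuous hζ hmaps

theorem starProjection_cyclicSubspace_mem_commutant (N : VonNeumannAlgebra H) (ξ : H) :
    (cyclicSubspace N ξ).starProjection ∈ N.commutant := by
  rw [VonNeumannAlgebra.IsStarProjection.mem_iff isStarProjection_starProjection,
    VonNeumannAlgebra.commutant_commutant, Submodule.range_starProjection]
  exact fun y hy ζ hζ => apply_mem_cyclicSubspace hy hζ

theorem IsSeparatingVector.isCyclicVector_commutant {M : VonNeumannAlgebra H}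
    (hsep : IsSeparatingVector M ξ) : IsCyclicVector M.commutant ξ := by
  let p := (cyclicSubspace M.commutant ξ).starProjection
  have hpM : p ∈ M := by
    simpa only [VonNeumannAlgebra.commutant_commutant] using
      starProjection_cyclicSubspace_mem_commutant M.commutant ξ
  have hpξ : (1 - p) ξ = 0 :=
    sub_eq_zero.mpr
      (Submodule.starProjection_eq_self_iff.mpr (self_mem_cyclicSubspace M.commutant ξ)).symm
  have hp_one : p = 1 := (sub_eq_zero.mp (hsep _ (sub_mem (one_mem M) hpM) hpξ)).symm
  rw [isCyclicVector_iff_cyclicSubspace_eq_top, Submodule.eq_top_iff']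
  exact fun ζ => Submodule.starProjection_eq_self_iff.mp (DFunLike.congr_fun hp_one ζ)

end CyclicSubspace

section SharpCone

open scoped ComplexOrder

variable {M N : VonNeumannAlgebra H} {ξ : H} {b : H →L[ℂ] H}

theorem IsCyclicVector.isPositive_of_forall_inner_nonneg (hξ : IsCyclicVector N ξ)
    (hb : ∀ y ∈ N, 0 ≤ ⟪b (y ξ), y ξ⟫_ℂ) : b.IsPositive := by
  have hclosed : IsClosed {ζ : H | 0 ≤ ⟪b ζ, ζ⟫_ℂ} := isClosed_le continuous_const (by fun_prop)
  have h_nonneg (ζ : H) : 0 ≤ ⟪b ζ, ζ⟫_ℂ := by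
    refine closure_minimal ?_ hclosed (hξ.dense_orbit ζ)
    rintro _ ⟨y, hy, rfl⟩
    exact hb y hy
  rw [ContinuousLinearMap.isPositive_iff_complex]
  exact fun ζ => ⟨(Complex.eq_re_of_ofReal_le (h_nonneg ζ)).symm,
    (Complex.nonneg_iff.mp (h_nonneg ζ)).1⟩

theorem apply_comm_of_mem_commutant {y : H →L[ℂ] H} (hy : y ∈ M.commutant)
    (hb : b ∈ M) (ζ : H) : y (b ζ) = b (y ζ) :=
  (DFunLike.congr_fun (VonNeumannAlgebra.mem_commutant_iff.mp hy b hb) ζ).symm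

theorem inner_apply_nonneg_of_mem_sharpCone {ζ : H} (hζ : ζ ∈ sharpCone M ξ) {y : H →L[ℂ] H}
    (hy : y ∈ M.commutant) : 0 ≤ ⟪y ζ, y ξ⟫_ℂ := by
  have hclosed : IsClosed {ζ : H | 0 ≤ ⟪y ζ, y ξ⟫_ℂ} :=
    isClosed_le continuous_const (by fun_prop)
  refine closure_minimal ?_ hclosed hζ
  rintro _ ⟨b, hbM, hb, rfl⟩
  rw [Set.mem_ofPred_eq, apply_comm_of_mem_commutant hy hbM]
  exact hb.inner_nonneg_left (y ξ)

theorem IsSeparatingVector.apply_mem_sharpCone_iff (hsep : IsSeparatingVector M ξ) (hb : b ∈ M) :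
    b ξ ∈ sharpCone M ξ ↔ b.IsPositive := by
  refine ⟨fun hbξ => ?_, fun hb_pos => subset_closure ⟨b, hb, hb_pos, rfl⟩⟩
  refine hsep.isCyclicVector_commutant.isPositive_of_forall_inner_nonneg fun y hy => ?_
  rw [← apply_comm_of_mem_commutant hy hb]
  exact inner_apply_nonneg_of_mem_sharpCone hbξ hy

end SharpCone

section SharpNorm

theorem inv_smul_le_one_iff_norm_le {A : Type*} [CStarAlgebra A] [PartialOrder A]
    [StarOrderedRing A] {a : A} (ha : 0 ≤ a) {c : ℝ} (hc : 0 < c) : c⁻¹ • a ≤ 1 ↔ ‖a‖ ≤ c := by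
  rw [← CStarAlgebra.norm_le_one_iff_of_nonneg _ (smul_nonneg (inv_nonneg.mpr hc.le) ha),
    norm_smul_of_nonneg (inv_nonneg.mpr hc.le), inv_mul_le_one₀ hc]

theorem csInf_setOf_lt_and_le {α : Type*} [ConditionallyCompleteLinearOrder α] [DenselyOrdered α]
    [NoMaxOrder α] {r s : α} (hrs : r ≤ s) : sInf {c | r < c ∧ s ≤ c} = s := by
  have hglb : IsGLB {c | r < c ∧ s ≤ c} s :=
    isGLB_Ioi.of_subset_of_superset isGLB_Ici (fun _ hc => ⟨hrs.trans_lt hc, hc.le⟩)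
      fun _ hc => hc.2
  obtain ⟨c, hc⟩ := exists_gt s
  exact hglb.csInf_eq ⟨c, hrs.trans_lt hc, hc.le⟩

theorem IsSeparatingVector.sub_inv_smul_mem_sharpCone_iff {M : VonNeumannAlgebra H} {ξ : H}
    (hsep : IsSeparatingVector M ξ) {a : H →L[ℂ] H} (haM : a ∈ M) (ha : a.IsPositive) {c : ℝ}
    (hc : 0 < c) : ξ - c⁻¹ • a ξ ∈ sharpCone M ξ ↔ ‖a‖ ≤ c := by
  have hmem : 1 - c⁻¹ • a ∈ M :=
    sub_mem (one_mem M) (M.toStarSubalgebra.smul_mem haM ((c⁻¹ : ℝ) : ℂ))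
  calc ξ - c⁻¹ • a ξ ∈ sharpCone M ξ
      ↔ (1 - c⁻¹ • a).IsPositive := hsep.apply_mem_sharpCone_iff hmem
    _ ↔ c⁻¹ • a ≤ 1 := (ContinuousLinearMap.le_def _ _).symm
    _ ↔ ‖a‖ ≤ c :=
      inv_smul_le_one_iff_norm_le ((ContinuousLinearMap.nonneg_iff_isPositive a).mpr ha) hc

end SharpNorm

theorem stmt18_general (M : VonNeumannAlgebra H) (ξ₀ : H) (hsep : IsSeparatingVector M ξ₀)
    (a : H →L[ℂ] H) (haM : a ∈ M) (ha_pos : a.IsPositive) :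
    sInf {c : ℝ | 0 < c ∧ ξ₀ - c⁻¹ • (a ξ₀) ∈ sharpCone M ξ₀} = ‖a‖ := by
  have hset : {c : ℝ | 0 < c ∧ ξ₀ - c⁻¹ • (a ξ₀) ∈ sharpCone M ξ₀} = {c | 0 < c ∧ ‖a‖ ≤ c} :=
    Set.ext fun _ => and_congr_right fun hc => hsep.sub_inv_smul_mem_sharpCone_iff haM ha_pos hc
  rw [hset, csInf_setOf_lt_and_le (norm_nonneg a)]

/-- For positive `a ∈ M`, the sharp norm of `a ξ₀` equals `‖a‖`:
`inf {c > 0 : ξ₀ - c⁻¹ • (a ξ₀) ∈ P♯} = ‖a‖`. -/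
theorem stmt18 (M : VonNeumannAlgebra H) (ξ₀ : H)
    (hcyc : IsCyclicVector M ξ₀) (hsep : IsSeparatingVector M ξ₀)
    (a : H →L[ℂ] H) (haM : a ∈ M) (ha_pos : a.IsPositive) :
    sInf {c : ℝ | 0 < c ∧ ξ₀ - c⁻¹ • (a ξ₀) ∈ sharpCone M ξ₀} = ‖a‖ :=
  stmt18_general M ξ₀ hsep a haM ha_pos
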